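/- In the dihedral group D_n = ⟨r,s | r^n = s^2 = rsrs = e⟩ with n ≥ 3, Player 1 has a winning strategy for REL(D_n, {r,s}) if n is odd or n ≡ 2 (mod 6), and Player 2 has a winning strategy if n is even and n ≢ 2 (mod 6). -/

import Mathlib

namespace RelatorGames

variable {G : Type*} [Group G]

/-- The letters available in the relator games: elements of `S` and their inverses. -/
def letters (S : Set G) : Set G := S ∪ (fun g => g⁻¹) '' S

/-- Evaluate a history of moves (most recent letter first) to a group element:
the group element represented by the word built so far. -/
def eval (h : List G) : G := h.reverse.prod

/-- A move `m` is legal after history `h`: it is a letter of `S ∪ S⁻¹` and it is not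
the inverse of the immediately preceding letter (no backtracking). -/
def LegalMove (S : Set G) (h : List G) (m : G) : Prop :=
  m ∈ letters S ∧ ∀ p ∈ h.head?, m ≠ p⁻¹

/-- Appending `m` to the history `h` produces a word equal in `G` to some earlier
prefix of the word (equivalently, the walk in the Cayley graph revisits a vertex). -/
def ClosesCycle (h : List G) (m : G) : Prop :=
  ∃ t, t <:+ h ∧ eval t = eval (m :: h)

/-- A strategy: a choice of next letter given the history (most recent letter first). -/
abbrev Strategy (G : Type*) := List G → G

/-- The sequence of histories arising when the first player (moving at even steps)
uses `σ` and the second player (moving at odd steps) uses `τ`. -/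
def hist (σ τ : Strategy G) : ℕ → List G
  | 0 => []
  | k + 1 =>
      (if k % 2 = 0 then σ (hist σ τ k) else τ (hist σ τ k)) :: hist σ τ k

/-- The move made at step `k` in the play of `σ` against `τ`. -/
def moveAt (σ τ : Strategy G) (k : ℕ) : G :=
  if k % 2 = 0 then σ (hist σ τ k) else τ (hist σ τ k)

/-- Step `j` is uneventful: the move made is legal and does not close a cycle. -/
def Ok (S : Set G) (σ τ : Strategy G) (j : ℕ) : Prop :=
  LegalMove S (hist σ τ j) (moveAt σ τ j) ∧ ¬ ClosesCycle (hist σ τ j) (moveAt σ τ j)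

/-- In the play of `σ` against `τ`, the player moving at steps congruent to `p` mod 2
wins the relator achievement game `REL(G,S)`: at the first eventful step, either it is
that player's turn and they legally close a cycle, or it is the opponent's turn and the
opponent has made an illegal move (in particular, has no legal move). -/
def RelWins (S : Set G) (p : ℕ) (σ τ : Strategy G) : Prop :=
  ∃ k : ℕ, (∀ j < k, Ok S σ τ j) ∧
    ((k % 2 = p ∧ LegalMove S (hist σ τ k) (moveAt σ τ k) ∧
        ClosesCycle (hist σ τ k) (moveAt σ τ k)) ∨
      (k % 2 ≠ p ∧ ¬ LegalMove S (hist σ τ k) (moveAt σ τ k)))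

/-- In the play of `σ` against `τ`, the player moving at steps congruent to `p` mod 2
wins the relator avoidance game `RAV(G,S)`: at the first eventful step it is the
opponent's turn, and the opponent either makes an illegal move (in particular, has no
legal move) or closes a cycle. -/
def RavWins (S : Set G) (p : ℕ) (σ τ : Strategy G) : Prop :=
  ∃ k : ℕ, (∀ j < k, Ok S σ τ j) ∧ k % 2 ≠ p ∧
    (¬ LegalMove S (hist σ τ k) (moveAt σ τ k) ∨ ClosesCycle (hist σ τ k) (moveAt σ τ k))

/-- Player 1 has a winning strategy for `REL(G,S)`. -/
def FirstWinsREL (S : Set G) : Prop :=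
  ∃ σ : Strategy G, ∀ τ : Strategy G, RelWins S 0 σ τ

/-- Player 2 has a winning strategy for `REL(G,S)`. -/
def SecondWinsREL (S : Set G) : Prop :=
  ∃ τ : Strategy G, ∀ σ : Strategy G, RelWins S 1 σ τ

/-- Player 1 has a winning strategy for `RAV(G,S)`. -/
def FirstWinsRAV (S : Set G) : Prop :=
  ∃ σ : Strategy G, ∀ τ : Strategy G, RavWins S 0 σ τ

/-- Player 2 has a winning strategy for `RAV(G,S)`. -/
def SecondWinsRAV (S : Set G) : Prop :=
  ∃ τ : Strategy G, ∀ σ : Strategy G, RavWins S 1 σ τ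

end RelatorGames

namespace RelatorGames

/-! ### Ranked winning positions -/

/-- The player to move wins with rank `k`. -/
def WinIn {G : Type*} [Group G] (S : Set G) : ℕ → List G → Prop
  | 0, _ => False
  | k + 1, h => ∃ m, LegalMove S h m ∧ (ClosesCycle h m ∨
      ∀ m', LegalMove S (m :: h) m' → ¬ ClosesCycle (m :: h) m' ∧ WinIn S k (m' :: m :: h))

/-- The player to move loses with rank `k`. -/
def LoseIn {G : Type*} [Group G] (S : Set G) (k : ℕ) (h : List G) : Prop :=
  ∀ m, LegalMove S h m → ¬ ClosesCycle h m ∧ WinIn S k (m :: h)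

lemma winIn_close {G : Type*} [Group G] {S : Set G} {k : ℕ} {h : List G} (m : G)
    (h1 : LegalMove S h m) (h2 : ClosesCycle h m) : WinIn S (k + 1) h :=
  ⟨m, h1, Or.inl h2⟩

lemma winIn_step {G : Type*} [Group G] {S : Set G} {k : ℕ} {h : List G} (m : G)
    (h1 : LegalMove S h m) (h2 : LoseIn S k (m :: h)) : WinIn S (k + 1) h :=
  ⟨m, h1, Or.inr h2⟩

open Classical in
/-- The optimal strategy: play a witness for the least rank. -/
noncomputable def best {G : Type*} [Group G] (S : Set G) : Strategy G := fun h =>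
  if hk : ∃ k, WinIn S (k + 1) h then (Nat.find_spec hk).choose else 1

lemma best_spec {G : Type*} [Group G] (S : Set G) {k : ℕ} {h : List G} (hw : WinIn S (k + 1) h) :
    ∃ k' ≤ k, LegalMove S h (best S h) ∧ (ClosesCycle h (best S h) ∨
      LoseIn S k' (best S h :: h)) := by
  classical
  have hk : ∃ k, WinIn S (k + 1) h := ⟨k, hw⟩
  refine ⟨Nat.find hk, Nat.find_min' hk hw, ?_⟩
  have e : best S h = (Nat.find_spec hk).choose := by
    unfold best
    rw [dif_pos hk]
  rw [e]
  exact (Nat.find_spec hk).choose_spec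

lemma relWins_of_winIn {G : Type*} [Group G] (S : Set G) (σ τ : Strategy G) (p : ℕ)
    (hp : ∀ i, i % 2 = p → moveAt σ τ i = best S (hist σ τ i)) :
    ∀ k i, i % 2 = p → (∀ j < i, Ok S σ τ j) → WinIn S k (hist σ τ i) → RelWins S p σ τ := by
  intro k
  induction k using Nat.strong_induction_on with
  | _ k ih =>
    intro i hi hok hw
    cases k with
    | zero => exact hw.elim
    | succ k =>
      have hh : ∀ i, hist σ τ (i + 1) = moveAt σ τ i :: hist σ τ i := fun i => rfl
      obtain ⟨k', hk', hl, hc⟩ := best_spec S hw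
      rw [← hp i hi] at hl hc
      by_cases hcl : ClosesCycle (hist σ τ i) (moveAt σ τ i)
      · exact ⟨i, hok, Or.inl ⟨hi, hl, hcl⟩⟩
      · have hL := hc.resolve_left hcl
        rw [← hh] at hL
        have hok1 : ∀ j < i + 1, Ok S σ τ j := by
          intro j hj
          rcases Nat.lt_succ_iff_lt_or_eq.mp hj with h | rfl
          · exact hok j h
          · exact ⟨hl, hcl⟩
        by_cases hl2 : LegalMove S (hist σ τ (i + 1)) (moveAt σ τ (i + 1))
        · obtain ⟨h1, h2⟩ := hL _ hl2
          rw [← hh] at h2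
          refine ih k' (by omega) (i + 1 + 1) (by omega) ?_ h2
          intro j hj
          rcases Nat.lt_succ_iff_lt_or_eq.mp hj with h | rfl
          · exact hok1 j h
          · exact ⟨hl2, h1⟩
        · exact ⟨i + 1, hok1, Or.inr ⟨by omega, hl2⟩⟩

lemma firstWins_of_winIn {G : Type*} [Group G] (S : Set G) (k : ℕ) (h : WinIn S k []) :
    FirstWinsREL S := by
  refine ⟨best S, fun τ => ?_⟩
  refine relWins_of_winIn S _ τ 0 ?_ k 0 rfl (by simp) h
  intro i hi
  simp [moveAt, hi]

lemma secondWins_of_loseIn {G : Type*} [Group G] (S : Set G) (k : ℕ) (h : LoseIn S k []) :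
    SecondWinsREL S := by
  refine ⟨best S, fun σ => ?_⟩
  by_cases hl : LegalMove S (hist σ (best S) 0) (moveAt σ (best S) 0)
  · obtain ⟨h1, h2⟩ := h _ hl
    refine relWins_of_winIn S σ (best S) 1 ?_ k 1 rfl ?_ h2
    · intro i hi
      simp [moveAt, hi]
    · intro j hj
      obtain rfl : j = 0 := by omega
      exact ⟨hl, h1⟩
  · exact ⟨0, by simp, Or.inr ⟨by simp, hl⟩⟩

/-! ### Visited vertices -/

/-- The vertex `v` has been visited. -/
def Vis {G : Type*} [Group G] (h : List G) (v : G) : Prop := ∃ t, t <:+ h ∧ eval t = v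

lemma eval_cons {G : Type*} [Group G] (m : G) (h : List G) : eval (m :: h) = eval h * m := by
  simp [eval]

lemma vis_nil {G : Type*} [Group G] (v : G) : Vis [] v ↔ v = 1 := by
  simp [Vis, eval, eq_comm]

lemma vis_cons {G : Type*} [Group G] (m : G) (h : List G) (v : G) :
    Vis (m :: h) v ↔ v = eval h * m ∨ Vis h v := by
  constructor
  · rintro ⟨t, ht, rfl⟩
    rcases List.suffix_cons_iff.mp ht with rfl | ht
    · exact Or.inl (eval_cons m h)
    · exact Or.inr ⟨t, ht, rfl⟩
  · rintro (rfl | ⟨t, ht, rfl⟩)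
    · exact ⟨m :: h, List.suffix_rfl, eval_cons m h⟩
    · exact ⟨t, ht.trans (List.suffix_cons m h), rfl⟩

lemma closes_iff {G : Type*} [Group G] (m : G) (h : List G) :
    ClosesCycle h m ↔ Vis h (eval h * m) := by
  unfold ClosesCycle Vis
  rw [eval_cons]

/-! ### The prism graph -/

open DihedralGroup

/-- The generating set. -/
abbrev gens (n : ℕ) : Set (DihedralGroup n) := {r 1, sr 0}

/-- Vertex in column `c`, ring `b`, where columns are counted in direction `ε`. -/
def V {n : ℕ} (ε : ZMod n) (c : ℕ) (b : Bool) : DihedralGroup n :=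
  if b then sr (-(ε * c)) else r (ε * c)

/-- Forward letter in ring `b`. -/
def fw {n : ℕ} (ε : ZMod n) (b : Bool) : DihedralGroup n := if b then r (-ε) else r ε

/-- Backward letter in ring `b`. -/
def bw {n : ℕ} (ε : ZMod n) (b : Bool) : DihedralGroup n := if b then r ε else r (-ε)

/-- `ε` is a direction. -/
def Dir {n : ℕ} (ε : ZMod n) : Prop := ε = 1 ∨ ε = -1

section

variable {n : ℕ} {ε : ZMod n}

lemma V_fw (c : ℕ) (b : Bool) : V ε c b * fw ε b = V ε (c + 1) b := by
  cases b <;> simp [V, fw] <;> ring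

lemma V_bw (c : ℕ) (b : Bool) : V ε (c + 1) b * bw ε b = V ε c b := by
  cases b <;> simp [V, bw] <;> ring

lemma V_s (c : ℕ) (b : Bool) : V ε c b * sr 0 = V ε c (!b) := by
  cases b <;> simp [V]

lemma V_n (b : Bool) : V ε n b = V ε 0 b := by
  cases b <;> simp [V]

lemma V_inj (hε : Dir ε) {c c' : ℕ} {b b' : Bool} (hc : c < n) (hc' : c' < n)
    (h : V ε c b = V ε c' b') : c = c' ∧ b = b' := by
  have key : ∀ x y : ZMod n, ε * x = ε * y → x = y := by
    rcases hε with rfl | rfl <;> simp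
  have key2 : ε * (c : ZMod n) = ε * (c' : ZMod n) → c = c' := by
    intro e
    have e1 := (ZMod.natCast_eq_natCast_iff' _ _ _).mp (key _ _ e)
    rwa [Nat.mod_eq_of_lt hc, Nat.mod_eq_of_lt hc'] at e1
  cases b <;> cases b' <;> simp [V] at h ⊢ <;> exact key2 h

lemma mem_letters (hε : Dir ε) (b : Bool) (m : DihedralGroup n) :
    m ∈ letters (gens n) ↔ m = fw ε b ∨ m = bw ε b ∨ m = sr 0 := by
  rcases hε with rfl | rfl <;> cases b <;> simp [letters, gens, fw, bw] <;> tauto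

lemma one_ne_neg_one (hn : 3 ≤ n) : (1 : ZMod n) ≠ -1 := by
  intro h
  have h2 : ((2 : ℕ) : ZMod n) = 0 := by
    push_cast
    linear_combination h
  have := Nat.le_of_dvd (by norm_num) ((ZMod.natCast_eq_zero_iff 2 n).mp h2)
  omega

lemma fw_ne_bw (hn : 3 ≤ n) (hε : Dir ε) (b : Bool) : fw ε b ≠ bw ε b := by
  have := one_ne_neg_one hn
  rcases hε with rfl | rfl <;> cases b <;> simp [fw, bw] <;> tauto

lemma fw_inv (b : Bool) : (fw ε b)⁻¹ = bw ε b := by cases b <;> simp [fw, bw]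
lemma bw_inv (b : Bool) : (bw ε b)⁻¹ = fw ε b := by cases b <;> simp [fw, bw]
lemma s_inv : (sr 0 : DihedralGroup n)⁻¹ = sr 0 := by simp
lemma fw_ne_s (b : Bool) : fw ε b ≠ sr 0 := by cases b <;> simp [fw]
lemma bw_ne_s (b : Bool) : bw ε b ≠ sr 0 := by cases b <;> simp [bw]

lemma legal_nil (hε : Dir ε) (b : Bool) (m : DihedralGroup n) :
    LegalMove (gens n) [] m ↔ m = fw ε b ∨ m = bw ε b ∨ m = sr 0 := by
  simp [LegalMove, mem_letters hε b]

lemma legal_fw (hn : 3 ≤ n) (hε : Dir ε) (b : Bool) (h : List (DihedralGroup n))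
    (hd : h.head? = some (fw ε b)) (m : DihedralGroup n) :
    LegalMove (gens n) h m ↔ m = fw ε b ∨ m = sr 0 := by
  simp only [LegalMove, mem_letters hε b, hd, Option.mem_some_iff, forall_eq', fw_inv]
  constructor
  · tauto
  · rintro (rfl | rfl)
    · exact ⟨by tauto, fw_ne_bw hn hε b⟩
    · exact ⟨by tauto, (bw_ne_s b).symm⟩

lemma legal_s (hε : Dir ε) (b : Bool) (h : List (DihedralGroup n))
    (hd : h.head? = some (sr 0)) (m : DihedralGroup n) :
    LegalMove (gens n) h m ↔ m = fw ε b ∨ m = bw ε b := by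
  simp only [LegalMove, mem_letters hε b, hd, Option.mem_some_iff, forall_eq', s_inv]
  constructor
  · tauto
  · rintro (rfl | rfl)
    · exact ⟨by tauto, fw_ne_s b⟩
    · exact ⟨by tauto, bw_ne_s b⟩

lemma legal_bw_s (hε : Dir ε) (b : Bool) (h : List (DihedralGroup n))
    (hd : h.head? = some (bw ε b)) : LegalMove (gens n) h (sr 0) := by
  simp only [LegalMove, mem_letters hε b, hd, Option.mem_some_iff, forall_eq', bw_inv]
  exact ⟨by tauto, (fw_ne_s b).symm⟩

/-! ### Position invariants -/

/-- Common part: the walk stands in column `c + 1`, ring `b`, never went beyond it;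
`z` records whether the vertex in column `0`, ring `true` was visited. -/
structure Inv (ε : ZMod n) (z : Bool) (c : ℕ) (b : Bool) (h : List (DihedralGroup n)) : Prop where
  lt : c + 1 < n
  ev : eval h = V ε (c + 1) b
  v0 : Vis h (V ε 0 false)
  vz : z = true → Vis h (V ε 0 true)
  nz : z = false → ¬ Vis h (V ε 0 true)
  nv : ∀ c' b', c + 1 < c' → c' < n → ¬ Vis h (V ε c' b')

/-- Free state. -/
structure IF (ε : ZMod n) (z : Bool) (c : ℕ) (b : Bool) (h : List (DihedralGroup n)) : Prop
    extends Inv ε z c b h where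
  hd : h.head? = some (fw ε b)
  n1 : ¬ Vis h (V ε (c + 1) (!b))
  n2 : ¬ Vis h (V ε c (!b))
  v1 : Vis h (V ε c b)

/-- The state just after a crossing and a forward step. -/
structure IN (ε : ZMod n) (z : Bool) (c : ℕ) (b : Bool) (h : List (DihedralGroup n)) : Prop
    extends Inv ε z c b h where
  hd : h.head? = some (fw ε b)
  n1 : ¬ Vis h (V ε (c + 1) (!b))
  v1 : Vis h (V ε c (!b))

/-- The state just after a crossing. -/
structure IC (ε : ZMod n) (z : Bool) (c : ℕ) (b : Bool) (h : List (DihedralGroup n)) : Prop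
    extends Inv ε z c b h where
  hd : h.head? = some (sr 0)
  n1 : ¬ Vis h (V ε c b)
  v1 : Vis h (V ε c (!b))
  v2 : Vis h (V ε (c + 1) (!b))

variable {z : Bool} {c : ℕ} {b : Bool} {h : List (DihedralGroup n)}

lemma Inv.fwd (hε : Dir ε) (H : Inv ε z c b h) (hc : c + 2 < n) :
    Inv ε z (c + 1) b (fw ε b :: h) := by
  have e : ∀ v, Vis (fw ε b :: h) v ↔ v = V ε (c + 2) b ∨ Vis h v := by
    intro v
    rw [vis_cons, H.ev, V_fw]
  refine ⟨hc, by rw [eval_cons, H.ev, V_fw], (e _).2 (Or.inr H.v0),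
    fun hz => (e _).2 (Or.inr (H.vz hz)), fun hz h' => ?_, fun c' b' h1 h2 h' => ?_⟩
  · rcases (e _).1 h' with h' | h'
    · have := (V_inj hε (by omega) (by omega) h').1
      omega
    · exact H.nz hz h'
  · rcases (e _).1 h' with h' | h'
    · have := (V_inj hε (by omega) (by omega) h').1
      omega
    · exact H.nv _ _ (by omega) h2 h'

lemma Inv.not_fwd (H : Inv ε z c b h) (hc : c + 2 < n) :
    ¬ ClosesCycle h (fw ε b) := by
  rw [closes_iff, H.ev, V_fw]
  exact H.nv _ _ (by omega) hc

lemma Inv.not_s (H : Inv ε z c b h) (h1 : ¬ Vis h (V ε (c + 1) (!b))) :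
    ¬ ClosesCycle h (sr 0) := by
  rwa [closes_iff, H.ev, V_s]

lemma Inv.n1_fwd (hε : Dir ε) (H : Inv ε z c b h) (hc : c + 2 < n) :
    ¬ Vis (fw ε b :: h) (V ε (c + 1 + 1) (!b)) := by
  rw [vis_cons, H.ev, V_fw]
  rintro (h' | h')
  · have := (V_inj hε (by omega) (by omega) h').2
    simp at this
  · exact H.nv _ _ (by omega) hc h'

lemma Inv.n2_fwd (hε : Dir ε) (H : Inv ε z c b h) (hc : c + 2 < n)
    (h1 : ¬ Vis h (V ε (c + 1) (!b))) :
    ¬ Vis (fw ε b :: h) (V ε (c + 1) (!b)) := by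
  rw [vis_cons, H.ev, V_fw]
  rintro (h' | h')
  · have := (V_inj hε (by omega) (by omega) h').2
    simp at this
  · exact h1 h'

lemma vis_self (h : List (DihedralGroup n)) : Vis h (eval h) := ⟨h, List.suffix_rfl, rfl⟩

lemma Inv.vis_fwd (H : Inv ε z c b h) (m : DihedralGroup n) : Vis (m :: h) (V ε (c + 1) b) := by
  rw [← H.ev]
  exact (vis_cons _ _ _).2 (Or.inr (vis_self h))

lemma IF.fwd (hε : Dir ε) (H : IF ε z c b h) (hc : c + 2 < n) :
    IF ε z (c + 1) b (fw ε b :: h) :=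
  ⟨H.toInv.fwd hε hc, rfl, H.toInv.n1_fwd hε hc, H.toInv.n2_fwd hε hc H.n1, H.toInv.vis_fwd _⟩

lemma IN.fwd (hε : Dir ε) (H : IN ε z c b h) (hc : c + 2 < n) :
    IF ε z (c + 1) b (fw ε b :: h) :=
  ⟨H.toInv.fwd hε hc, rfl, H.toInv.n1_fwd hε hc, H.toInv.n2_fwd hε hc H.n1, H.toInv.vis_fwd _⟩

lemma IC.fwd (hε : Dir ε) (H : IC ε z c b h) (hc : c + 2 < n) :
    IN ε z (c + 1) b (fw ε b :: h) :=
  ⟨H.toInv.fwd hε hc, rfl, H.toInv.n1_fwd hε hc, (vis_cons _ _ _).2 (Or.inr H.v2)⟩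

lemma IF.cross (hε : Dir ε) (H : IF ε z c b h) :
    IC ε z c (!b) (sr 0 :: h) := by
  have hlt := H.lt
  have e : ∀ v, Vis (sr 0 :: h) v ↔ v = V ε (c + 1) (!b) ∨ Vis h v := by
    intro v
    rw [vis_cons, H.ev, V_s]
  refine ⟨⟨H.lt, by rw [eval_cons, H.ev, V_s], (e _).2 (Or.inr H.v0),
    fun hz => (e _).2 (Or.inr (H.vz hz)), fun hz h' => ?_, fun c' b' h1 h2 h' => ?_⟩, rfl,
    fun h' => ?_, ?_, ?_⟩
  · rcases (e _).1 h' with h' | h'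
    · have := (V_inj hε (by omega) (by omega) h').1
      omega
    · exact H.nz hz h'
  · rcases (e _).1 h' with h' | h'
    · have := (V_inj hε (by omega) (by omega) h').1
      omega
    · exact H.nv _ _ (by omega) h2 h'
  · rcases (e _).1 h' with h' | h'
    · have := (V_inj hε (by omega) (by omega) h').1
      omega
    · exact H.n2 h'
  · rw [Bool.not_not]
    exact (e _).2 (Or.inr H.v1)
  · rw [Bool.not_not, ← H.ev]
    exact (e _).2 (Or.inr (vis_self h))

/-! ### Closing moves -/

/-- After `cross` from a state `IN`, going back closes a cycle. -/
lemma IN.win_cross (hε : Dir ε) (H : IN ε z c b h) (k : ℕ) :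
    WinIn (gens n) (k + 1) (sr 0 :: h) := by
  refine winIn_close (bw ε (!b)) ((legal_s hε (!b) _ rfl _).2 (Or.inr rfl)) ?_
  rw [closes_iff, eval_cons, H.ev, V_s, V_bw, vis_cons]
  exact Or.inr H.v1

lemma IC.not_bw (H : IC ε z c b h) : ¬ ClosesCycle h (bw ε b) := by
  rw [closes_iff, H.ev, V_bw]
  exact H.n1

/-- After going back from a state `IC`, crossing closes a cycle. -/
lemma IC.win_bw (hε : Dir ε) (H : IC ε z c b h) (k : ℕ) :
    WinIn (gens n) (k + 1) (bw ε b :: h) := by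
  refine winIn_close (sr 0) (legal_bw_s hε b _ rfl) ?_
  rw [closes_iff, eval_cons, H.ev, V_bw, V_s, vis_cons]
  exact Or.inr H.v1

/-- In the last column, going forward closes a cycle. -/
lemma Inv.closes_end (H : Inv ε z c b h) (hc : c + 2 = n) (hb : b = false ∨ z = true) :
    ClosesCycle h (fw ε b) := by
  rw [closes_iff, H.ev, V_fw, show c + 1 + 1 = n by omega, V_n]
  cases b
  · exact H.v0
  · exact H.vz (by simpa using hb)

/-! ### Games in which the vertex `(0, true)` was visited first -/

lemma loseA (hn : 3 ≤ n) (hε : Dir ε) (k : ℕ) : ∀ (c : ℕ) (b : Bool) (h : List (DihedralGroup n)),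
    n ≤ c + 2 + k →
    (IF ε true c b h → (n - 2 - c) % 3 = 2 → LoseIn (gens n) k h) ∧
    (IN ε true c b h → (n - 2 - c) % 3 ≠ 0 → LoseIn (gens n) k h) ∧
    (IC ε true c b h → (n - 2 - c) % 3 = 1 → LoseIn (gens n) k h) := by
  induction k with
  | zero =>
    intro c b h hk
    refine ⟨fun _ _ => ?_, fun _ _ => ?_, fun _ _ => ?_⟩ <;> omega
  | succ k ih =>
    intro c b h hk
    -- The winning answer from a free state.
    have aux : ∀ (h' : List (DihedralGroup n)), IF ε true (c + 1) b h' →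
        (n - 2 - (c + 1)) % 3 ≠ 2 → WinIn (gens n) (k + 1) h' := by
      intro h' H hd
      have hlt := H.lt
      by_cases h0 : c + 1 + 2 = n
      · exact winIn_close _ ((legal_fw hn hε b _ H.hd _).2 (Or.inl rfl))
          (H.toInv.closes_end h0 (Or.inr rfl))
      by_cases h1 : (n - 2 - (c + 1)) % 3 = 0
      · refine winIn_step _ ((legal_fw hn hε b _ H.hd _).2 (Or.inl rfl)) ?_
        exact (ih _ _ _ (by omega)).1 (H.fwd hε (by omega)) (by omega)
      · refine winIn_step _ ((legal_fw hn hε b _ H.hd _).2 (Or.inr rfl)) ?_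
        exact (ih _ _ _ (by omega)).2.2 (H.cross hε) (by omega)
    refine ⟨fun H hd m hm => ?_, fun H hd m hm => ?_, fun H hd m hm => ?_⟩
    · have hlt := H.lt
      rcases (legal_fw hn hε b _ H.hd _).1 hm with rfl | rfl
      · exact ⟨H.toInv.not_fwd (by omega), aux _ (H.fwd hε (by omega)) (by omega)⟩
      · refine ⟨H.toInv.not_s H.n1, ?_⟩
        have H' := H.cross hε
        refine winIn_step _ ((legal_s hε (!b) _ H'.hd _).2 (Or.inl rfl)) ?_
        exact (ih _ _ _ (by omega)).2.1 (H'.fwd hε (by omega)) (by omega)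
    · have hlt := H.lt
      rcases (legal_fw hn hε b _ H.hd _).1 hm with rfl | rfl
      · exact ⟨H.toInv.not_fwd (by omega), aux _ (H.fwd hε (by omega)) (by omega)⟩
      · exact ⟨H.toInv.not_s H.n1, H.win_cross hε k⟩
    · have hlt := H.lt
      rcases (legal_s hε b _ H.hd _).1 hm with rfl | rfl
      · refine ⟨H.toInv.not_fwd (by omega), ?_⟩
        have H' := H.fwd hε (by omega)
        by_cases h0 : c + 1 + 2 = n
        · exact winIn_close _ ((legal_fw hn hε b _ H'.hd _).2 (Or.inl rfl))
            (H'.toInv.closes_end h0 (Or.inr rfl))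
        · refine winIn_step _ ((legal_fw hn hε b _ H'.hd _).2 (Or.inl rfl)) ?_
          exact (ih _ _ _ (by omega)).1 (H'.fwd hε (by omega)) (by omega)
      · exact ⟨H.not_bw, H.win_bw hε k⟩

/-! ### Games that start with a rotation -/

lemma loseB (hn : 3 ≤ n) (hε : Dir ε) (k : ℕ) : ∀ (c : ℕ) (b : Bool) (h : List (DihedralGroup n)),
    n < c + 2 + k → (n + c + b.toNat) % 2 = 1 →
    (IF ε false c b h ∨ IN ε false c b h) → LoseIn (gens n) k h := by
  induction k with
  | zero =>
    rintro c b h hk - (H | H) <;> have := H.lt <;> omega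
  | succ k ih =>
    intro c b h hk hpar H
    have hI : Inv ε false c b h := by
      rcases H with H | H <;> exact H.toInv
    have hd : h.head? = some (fw ε b) := by
      rcases H with H | H <;> exact H.hd
    have n1 : ¬ Vis h (V ε (c + 1) (!b)) := by
      rcases H with H | H <;> exact H.n1
    have hlt := hI.lt
    intro m hm
    rcases (legal_fw hn hε b _ hd _).1 hm with rfl | rfl
    · by_cases h0 : c + 2 = n
      · have hb : b = true := by
          cases b
          · simp at hpar
            omega
          · rfl
        subst hb
        have e : eval h * fw ε true = V ε 0 true := by
          rw [hI.ev, V_fw, show c + 1 + 1 = n by omega, V_n]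
        refine ⟨?_, ?_⟩
        · rw [closes_iff, e]
          exact hI.nz rfl
        · refine winIn_close (sr 0) ((legal_fw hn hε true _ rfl _).2 (Or.inr rfl)) ?_
          rw [closes_iff, eval_cons, e, V_s, vis_cons]
          exact Or.inr hI.v0
      · refine ⟨hI.not_fwd (by omega), ?_⟩
        have H' : IF ε false (c + 1) b (fw ε b :: h) := by
          rcases H with H | H <;> exact H.fwd hε (by omega)
        by_cases h1 : c + 1 + 2 = n
        · have hb : b = false := by
            cases b
            · rfl
            · simp at hpar
              omega
          exact winIn_close _ ((legal_fw hn hε b _ H'.hd _).2 (Or.inl rfl))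
            (H'.toInv.closes_end h1 (Or.inl hb))
        · refine winIn_step _ ((legal_fw hn hε b _ H'.hd _).2 (Or.inl rfl)) ?_
          exact ih _ _ _ (by omega) (by omega) (Or.inl (H'.fwd hε (by omega)))
    · refine ⟨hI.not_s n1, ?_⟩
      rcases H with H | H
      · have H' := H.cross hε
        by_cases h0 : c + 2 = n
        · have hb : (!b) = false := by
            cases b
            · simp at hpar
              omega
            · rfl
          exact winIn_close _ ((legal_s hε (!b) _ H'.hd _).2 (Or.inl rfl))
            (H'.toInv.closes_end h0 (Or.inl hb))
        · refine winIn_step _ ((legal_s hε (!b) _ H'.hd _).2 (Or.inl rfl)) ?_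
          refine ih _ _ _ (by omega) ?_ (Or.inr (H'.fwd hε (by omega)))
          cases b <;> simp at hpar ⊢ <;> omega
      · exact H.win_cross hε k

/-! ### Opening positions -/

lemma V_zero_false : V ε 0 false = 1 := by simp [V]

lemma start_r (hn : 3 ≤ n) (hε : Dir ε) : IF ε false 0 false [fw ε false] := by
  have e : ∀ v, Vis [fw ε false] v ↔ v = V ε 1 false ∨ v = V ε 0 false := by
    intro v
    rw [vis_cons, vis_nil, show eval ([] : List (DihedralGroup n)) = V ε 0 false by
      rw [V_zero_false]; rfl, V_fw, ← V_zero_false (ε := ε)]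
  have nn : ∀ c b, c < n → b = true ∨ 1 < c → ¬ Vis [fw ε false] (V ε c b) := by
    intro c b hc hcb h'
    rcases (e _).1 h' with h' | h' <;>
    · obtain ⟨h1, h2⟩ := V_inj hε (by omega) (by omega) h'
      subst h2
      simp at hcb
      omega
  refine ⟨⟨by omega, ?_, (e _).2 (Or.inr rfl), by simp, fun _ => nn _ _ (by omega) (Or.inl rfl),
    fun c' b' h1 h2 => nn _ _ h2 (Or.inr h1)⟩, rfl, nn _ _ (by omega) (Or.inl rfl),
    nn _ _ (by omega) (Or.inl rfl), (e _).2 (Or.inr rfl)⟩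
  rw [eval_cons, show eval ([] : List (DihedralGroup n)) = V ε 0 false by
      rw [V_zero_false]; rfl, V_fw]

lemma start_s (hn : 3 ≤ n) (hε : Dir ε) : IN ε true 0 true [fw ε true, sr 0] := by
  have e1 : eval ([] : List (DihedralGroup n)) = V ε 0 false := by
    rw [V_zero_false]; rfl
  have e2 : eval [(sr 0 : DihedralGroup n)] = V ε 0 true := by
    rw [eval_cons, e1, V_s]; rfl
  have e : ∀ v, Vis [fw ε true, sr 0] v ↔ v = V ε 1 true ∨ v = V ε 0 true ∨ v = V ε 0 false := by
    intro v
    rw [vis_cons, e2, V_fw, vis_cons, e1, V_s, vis_nil, ← V_zero_false (ε := ε)]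
    rfl
  have nn : ∀ c b, c < n → (c = 1 ∧ b = false) ∨ 1 < c → ¬ Vis [fw ε true, sr 0] (V ε c b) := by
    intro c b hc hcb h'
    rcases (e _).1 h' with h' | h' | h' <;>
    · obtain ⟨h1, h2⟩ := V_inj hε (by omega) (by omega) h'
      subst h2
      simp at hcb
      omega
  refine ⟨⟨by omega, ?_, (e _).2 (by tauto), fun _ => (e _).2 (by tauto), by simp,
    fun c' b' h1 h2 => nn _ _ h2 (Or.inr h1)⟩, rfl, nn _ _ (by omega) (Or.inl ⟨rfl, rfl⟩),
    (e _).2 (by simp)⟩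
  rw [eval_cons, e2, V_fw]

lemma eval_nil' : eval ([] : List (DihedralGroup n)) = V ε 0 false := by
  rw [V_zero_false]; rfl

lemma not_closes_nil_fw (hn : 3 ≤ n) (hε : Dir ε) : ¬ ClosesCycle [] (fw ε false) := by
  rw [closes_iff, vis_nil, eval_nil' (ε := ε), V_fw, ← V_zero_false (ε := ε)]
  intro h'
  have := (V_inj hε (by omega) (by omega) h').1
  omega

lemma not_closes_nil_s (hn : 3 ≤ n) : ¬ ClosesCycle [] (sr 0 : DihedralGroup n) := by
  have hε : Dir (1 : ZMod n) := Or.inl rfl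
  rw [closes_iff, vis_nil, eval_nil' (ε := 1), V_s, ← V_zero_false (ε := 1)]
  intro h'
  have := (V_inj hε (by omega) (by omega) h').2
  simp at this

lemma not_closes_s_fw (hn : 3 ≤ n) (hε : Dir ε) :
    ¬ ClosesCycle [sr 0] (fw ε true) := by
  rw [closes_iff, vis_cons, vis_nil, eval_cons, eval_nil' (ε := ε), V_s,
    ← V_zero_false (ε := ε), Bool.not_false, V_fw]
  rintro (h' | h')
  all_goals
    have := (V_inj hε (by omega) (by omega) h').1
    omega

lemma bw_eq_fw_neg (b : Bool) : bw ε b = fw (-ε) b := by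
  cases b <;> simp [bw, fw]

end

end RelatorGames

open RelatorGames in
/-- In `REL(D_n, {r,s})` with `n ≥ 3`: Player 1 has a winning strategy
if `n` is odd or `n ≡ 2 (mod 6)`; Player 2 has one if `n` is even and `n ≢ 2 (mod 6)`. -/
theorem rel_dihedral (n : ℕ) (hn : 3 ≤ n) :
    ((Odd n ∨ n % 6 = 2) →
      FirstWinsREL ({DihedralGroup.r 1, DihedralGroup.sr 0} : Set (DihedralGroup n))) ∧
    ((Even n ∧ n % 6 ≠ 2) →
      SecondWinsREL ({DihedralGroup.r 1, DihedralGroup.sr 0} : Set (DihedralGroup n))) := by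
  constructor
  · intro h
    by_cases ho : Odd n
    · have hε : Dir (1 : ZMod n) := Or.inl rfl
      refine firstWins_of_winIn _ (n + 1) (winIn_step _ ((legal_nil hε false _).2 (Or.inl rfl)) ?_)
      refine loseB hn hε n 0 false _ (by omega) ?_ (Or.inl (start_r hn hε))
      simpa using Nat.odd_iff.mp ho
    · have h6 := h.resolve_left ho
      have hε : Dir (1 : ZMod n) := Or.inl rfl
      refine firstWins_of_winIn _ (n + 1 + 1)
        (winIn_step (DihedralGroup.sr 0) ((legal_nil hε false _).2 (Or.inr (Or.inr rfl))) ?_)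
      have key : ∀ ε : ZMod n, Dir ε → ¬ ClosesCycle [DihedralGroup.sr 0] (fw ε true) ∧
          WinIn (gens n) (n + 1) [fw ε true, DihedralGroup.sr 0] := by
        intro ε hε
        have H := start_s hn hε
        refine ⟨not_closes_s_fw hn hε, ?_⟩
        refine winIn_step _ ((legal_fw hn hε true _ H.hd _).2 (Or.inl rfl)) ?_
        exact (loseA hn hε n _ _ _ (by omega)).1 (H.fwd hε (by omega)) (by omega)
      intro m hm
      rcases (legal_s hε true _ rfl _).1 hm with rfl | rfl
      · exact key _ hε
      · rw [bw_eq_fw_neg]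
        exact key _ (Or.inr rfl)
  · rintro ⟨he, h6⟩
    have he2 := Nat.even_iff.mp he
    have hε : Dir (1 : ZMod n) := Or.inl rfl
    refine secondWins_of_loseIn _ (n + 1) ?_
    have key : ∀ ε : ZMod n, Dir ε → ¬ ClosesCycle [] (fw ε false) ∧
        WinIn (gens n) (n + 1) [fw ε false] := by
      intro ε hε
      have H := start_r hn hε
      refine ⟨not_closes_nil_fw hn hε, ?_⟩
      refine winIn_step _ ((legal_fw hn hε false _ H.hd _).2 (Or.inl rfl)) ?_
      refine loseB hn hε n _ _ _ (by omega) ?_ (Or.inl (H.fwd hε (by omega)))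
      simp
      omega
    intro m hm
    rcases (legal_nil hε false _).1 hm with rfl | rfl | rfl
    · exact key _ hε
    · rw [bw_eq_fw_neg]
      exact key _ (Or.inr rfl)
    · refine ⟨not_closes_nil_s hn, ?_⟩
      refine winIn_step _ ((legal_s hε true _ rfl _).2 (Or.inl rfl)) ?_
      exact (loseA hn hε n _ _ _ (by omega)).2.1 (start_s hn hε) (by omega)
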